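/- arXiv:2605.29517 — 5 statements merged into one kernel-verified Lean document; each statement's English description precedes it below -/
import Mathlib

section
/- Let d, L_q, L_d be natural numbers with L_d > 0, let Q : Fin L_q → EuclideanSpace ℝ (Fin d) and D : Fin L_d → EuclideanSpace ℝ (Fin d), and define score(Q,D) = ∑_{i : Fin L_q} max_{j : Fin L_d} ⟪Q i, D j⟫. Let T_1, …, T_K be finite subsets (Finsets) of Fin L_d whose union is all of Fin L_d, and let C_1, …, C_P be pairwise disjoint Finsets of Fin L_q whose union is all of Fin L_q. For each i, define m_i ∈ WithBot ℝ as the fold m_i^{(0)} = ⊥, m_i^{(k)} = max(m_i^{(k-1)}, sup_{j ∈ T_k} (⟪Q i, D j⟫ : WithBot ℝ)). Then every m_i^{(K)} is not ⊥, and ∑_{p=1}^{P} ∑_{i ∈ C_p} (m_i^{(K)}).unbot = score(Q,D). In other words, the tile-streamed running-max algorithm with query chunking returns exactly the MaxSim score. -/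
/-!
The running maximum is associative and commutative, so after `K` tiles it equals the supremum
over the union of the tiles (`onlineMax_eq_sup_biUnion`). The tiles cover `Fin Ld`, hence it is
the coercion of the dense maximum (`onlineMax_eq_coe_sup'`), which is not `⊥`. Summing over
the query chunks is a sum over their disjoint union, which is all of `Fin Lq`.
-/

open scoped InnerProductSpace BigOperators

/-- Online running-max fold over document tiles `T 1, …, T k`, taken in `WithBot ℝ`
(`⊥` playing the role of `-∞`): `m⁰ = ⊥`, `mᵏ = max (mᵏ⁻¹) (sup_{j ∈ T k} s j)`. -/
noncomputable def onlineMax {Ld : ℕ} (s : Fin Ld → ℝ) (T : ℕ → Finset (Fin Ld)) :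
    ℕ → WithBot ℝ
  | 0 => ⊥
  | k + 1 => max (onlineMax s T k) ((T (k + 1)).sup fun j => (s j : WithBot ℝ))

theorem onlineMax_eq_sup_biUnion {Ld : ℕ} (s : Fin Ld → ℝ) (T : ℕ → Finset (Fin Ld)) (K : ℕ) :
    onlineMax s T K =
      ((Finset.range K).biUnion fun k => T (k + 1)).sup fun j => (s j : WithBot ℝ) := by
  induction K with
  | zero => simp [onlineMax]
  | succ k ih =>
    rw [onlineMax, ih, Finset.range_add_one, Finset.biUnion_insert, Finset.sup_union, sup_comm]

theorem onlineMax_eq_coe_sup' {Ld : ℕ} (s : Fin Ld → ℝ) (T : ℕ → Finset (Fin Ld)) (K : ℕ)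
    (hT : (Finset.range K).biUnion (fun k => T (k + 1)) = Finset.univ)
    (hne : (Finset.univ : Finset (Fin Ld)).Nonempty) :
    onlineMax s T K = ((Finset.univ.sup' hne s : ℝ) : WithBot ℝ) := by
  rw [onlineMax_eq_sup_biUnion, hT, Finset.coe_sup']
  rfl

/-- **Proposition 1 (Exactness).** The tile-streamed running-max algorithm with query
chunking returns exactly the dense MaxSim score
`score(Q,D) = ∑_i max_j ⟪Q i, D j⟫`. -/
theorem flash_maxsim_forward_exact
    (d Lq Ld K P : ℕ) (hLd : 0 < Ld)
    (Q : Fin Lq → EuclideanSpace ℝ (Fin d))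
    (D : Fin Ld → EuclideanSpace ℝ (Fin d))
    (T : ℕ → Finset (Fin Ld))
    (hT : (Finset.range K).biUnion (fun k => T (k + 1)) = Finset.univ)
    (C : ℕ → Finset (Fin Lq))
    (hCdisj : ∀ p p', p < P → p' < P → p ≠ p' → Disjoint (C (p + 1)) (C (p' + 1)))
    (hCunion : (Finset.range P).biUnion (fun p => C (p + 1)) = Finset.univ) :
    (∀ i : Fin Lq, onlineMax (fun j => ⟪Q i, D j⟫_ℝ) T K ≠ ⊥) ∧
    ∀ h : ∀ i : Fin Lq, onlineMax (fun j => ⟪Q i, D j⟫_ℝ) T K ≠ ⊥,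
      (∑ p ∈ Finset.range P, ∑ i ∈ C (p + 1),
          (onlineMax (fun j => ⟪Q i, D j⟫_ℝ) T K).unbot (h i)) =
        ∑ i : Fin Lq,
          Finset.univ.sup'
            (Finset.univ_nonempty_iff.mpr (Fin.pos_iff_nonempty.mp hLd))
            (fun j => ⟪Q i, D j⟫_ℝ) := by
  have key := fun i : Fin Lq => onlineMax_eq_coe_sup' (fun j => ⟪Q i, D j⟫_ℝ) T K hT
    (Finset.univ_nonempty_iff.mpr (Fin.pos_iff_nonempty.mp hLd))
  refine ⟨fun i => by rw [key i]; exact WithBot.coe_ne_bot, fun h => ?_⟩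
  rw [← hCunion, Finset.sum_biUnion]
  · refine Finset.sum_congr rfl fun p _ => Finset.sum_congr rfl fun i _ => ?_
    rw [← WithBot.coe_inj, WithBot.coe_unbot, key i]
  · intro p hp p' hp' hne
    exact hCdisj p p' (by simpa using hp) (by simpa using hp') hne
end

section
/- Let N_q, B, L_q, L_d, d be natural numbers with L_d > 0, let g : Fin N_q → Fin B → ℝ, let D : Fin B → Fin L_d → EuclideanSpace ℝ (Fin d), and define F on query banks Q : Fin N_q → Fin L_q → EuclideanSpace ℝ (Fin d) by F(Q) = ∑_{i,j} g i j * ∑_{s : Fin L_q} max_{t : Fin L_d} ⟪Q i s, D j t⟫. Fix Q⁰ and suppose that for every (i, j, s) there is a strict argmax t*(i,j,s), i.e. ⟪Q⁰ i s, D j t⟫ < ⟪Q⁰ i s, D j (t*(i,j,s))⟫ for all t ≠ t*(i,j,s). Then F is Fréchet differentiable at Q⁰ (with respect to the product space of all query-token vectors) and its derivative is the linear map ΔQ ↦ ∑_{i,s} ⟪ΔQ i s, ∑_{j} g i j • D j (t*(i,j,s))⟫; equivalently, the gradient of F with respect to the query token Q_{i,s} is ∑_{j} g i j • D j (t*(i,j,s)).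 -/
/-!
A strict argmax over a finite set stays an argmax under small perturbations of the query
tokens. Hence, on a neighbourhood of `Q0`, each maximum equals `⟪Q i s, D j (tstar i j s)⟫`
and the objective coincides with a continuous linear functional of `Q`, which is its own
derivative.
-/

open scoped InnerProductSpace BigOperators

/-- **Closed-form query gradient (Eq. 2).** For the contracted all-pairs MaxSim
objective `F(Q) = ∑_{i,j} g i j * ∑_s max_t ⟪Q i s, D j t⟫`, if every `(i,j,s)` has a
strict forward argmax `t*(i,j,s)` at `Q⁰`, then `F` is Fréchet differentiable at `Q⁰`
with derivative `ΔQ ↦ ∑_{i,s} ⟪ΔQ i s, ∑_j g i j • D j (t*(i,j,s))⟫`; i.e. the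
gradient with respect to the query token `Q i s` is `∑_j g i j • D j (t*(i,j,s))`. -/
theorem maxsim_query_gradient
    (Nq B Lq Ld d : ℕ) (hLd : 0 < Ld)
    (g : Fin Nq → Fin B → ℝ)
    (D : Fin B → Fin Ld → EuclideanSpace ℝ (Fin d))
    (F : (Fin Nq → Fin Lq → EuclideanSpace ℝ (Fin d)) → ℝ)
    (hF : F = fun Q => ∑ i : Fin Nq, ∑ j : Fin B, g i j *
        ∑ s : Fin Lq,
          Finset.univ.sup'
            (Finset.univ_nonempty_iff.mpr (Fin.pos_iff_nonempty.mp hLd))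
            (fun t => ⟪Q i s, D j t⟫_ℝ))
    (Q0 : Fin Nq → Fin Lq → EuclideanSpace ℝ (Fin d))
    (tstar : Fin Nq → Fin B → Fin Lq → Fin Ld)
    (hstrict : ∀ (i : Fin Nq) (j : Fin B) (s : Fin Lq) (t : Fin Ld),
      t ≠ tstar i j s → ⟪Q0 i s, D j t⟫_ℝ < ⟪Q0 i s, D j (tstar i j s)⟫_ℝ) :
    ∃ L : (Fin Nq → Fin Lq → EuclideanSpace ℝ (Fin d)) →L[ℝ] ℝ,
      (∀ ΔQ : Fin Nq → Fin Lq → EuclideanSpace ℝ (Fin d),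
        L ΔQ = ∑ i : Fin Nq, ∑ s : Fin Lq,
          ⟪ΔQ i s, ∑ j : Fin B, g i j • D j (tstar i j s)⟫_ℝ) ∧
      HasFDerivAt F L Q0 := by
  subst hF
  -- Strict inequalities persist near `Q0`, so every argmax is locally constant.
  have hmax : ∀ᶠ Q in nhds Q0, ∀ (i : Fin Nq) (j : Fin B) (s : Fin Lq) (t : Fin Ld),
      ⟪Q i s, D j t⟫_ℝ ≤ ⟪Q i s, D j (tstar i j s)⟫_ℝ := by
    simp only [Filter.eventually_all]
    intro i j s t
    by_cases ht : t = tstar i j s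
    · subst ht
      exact Filter.Eventually.of_forall fun _ => le_rfl
    · have hcont : ∀ v : EuclideanSpace ℝ (Fin d),
          ContinuousAt (fun Q : Fin Nq → Fin Lq → EuclideanSpace ℝ (Fin d) => ⟪Q i s, v⟫_ℝ) Q0 :=
        fun v => (((continuous_apply s).comp (continuous_apply i)).inner continuous_const).continuousAt
      exact ((hcont _).eventually_lt (hcont _) (hstrict i j s t ht)).mono fun _ h => h.le
  let L : (Fin Nq → Fin Lq → EuclideanSpace ℝ (Fin d)) →L[ℝ] ℝ :=
    ∑ i : Fin Nq, ∑ s : Fin Lq,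
      (innerSL ℝ (∑ j : Fin B, g i j • D j (tstar i j s))).comp
        ((ContinuousLinearMap.proj (R := ℝ) (φ := fun _ : Fin Lq => EuclideanSpace ℝ (Fin d)) s).comp
          (ContinuousLinearMap.proj (R := ℝ)
            (φ := fun _ : Fin Nq => Fin Lq → EuclideanSpace ℝ (Fin d)) i))
  have hL : ∀ ΔQ : Fin Nq → Fin Lq → EuclideanSpace ℝ (Fin d),
      L ΔQ = ∑ i : Fin Nq, ∑ s : Fin Lq,
        ⟪ΔQ i s, ∑ j : Fin B, g i j • D j (tstar i j s)⟫_ℝ := by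
    intro ΔQ
    simp only [L, sum_apply, ContinuousLinearMap.comp_apply,
      ContinuousLinearMap.proj_apply, innerSL_apply_apply]
    exact Finset.sum_congr rfl fun i _ => Finset.sum_congr rfl fun s _ => real_inner_comm _ _
  refine ⟨L, hL, L.hasFDerivAt.congr_of_eventuallyEq ?_⟩
  filter_upwards [hmax] with Q hQ
  rw [hL]
  refine Finset.sum_congr rfl fun i _ => ?_
  simp only [inner_sum, inner_smul_right, Finset.mul_sum]
  rw [Finset.sum_comm]
  refine Finset.sum_congr rfl fun s _ => Finset.sum_congr rfl fun j _ => ?_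
  congr 1
  exact le_antisymm (Finset.sup'_le _ _ fun t _ => hQ i j s t)
    (Finset.le_sup' (fun t => ⟪Q i s, D j t⟫_ℝ) (Finset.mem_univ (tstar i j s)))
end

section
/- Let N_q, B, L_q, L_d, d be natural numbers with L_d > 0, let g : Fin N_q → Fin B → ℝ, let Q : Fin N_q → Fin L_q → EuclideanSpace ℝ (Fin d), and define G on document banks D : Fin B → Fin L_d → EuclideanSpace ℝ (Fin d) by G(D) = ∑_{i,j} g i j * ∑_{s : Fin L_q} max_{t : Fin L_d} ⟪Q i s, D j t⟫. Fix D⁰ and suppose that for every (i, j, s) there is a strict argmax t*(i,j,s), i.e. ⟪Q i s, D⁰ j t⟫ < ⟪Q i s, D⁰ j (t*(i,j,s))⟫ for all t ≠ t*(i,j,s). Then G is Fréchet differentiable at D⁰ (with respect to the product space of all document-token vectors) and its derivative is the linear map ΔD ↦ ∑_{j,t} ⟪ΔD j t, ∑_{(i,s) : t*(i,j,s) = t} g i j • Q i s⟫; equivalently, the gradient of G with respect to the document token D_{j,t} is ∑ over exactly those pairs (i,s) whose forward argmax selected t, of g i j • Q i s. -/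
/-!
The pointwise maximum of finitely many functions agrees, near a point where one of them strictly
dominates and all are continuous, with the dominating function, hence inherits its derivative
(`hasFDerivAt_sup'_of_strict`). So each `max_t ⟪Q i s, D j t⟫` has at `D0` the derivative
`ΔD ↦ ⟪Q i s, ΔD j (t* i j s)⟫`, and `G`, being a linear combination of these maxima, has the
corresponding combination as derivative. Grouping the pairs `(i, s)` by the value of `t* i j s`
gives the closed form.
-/

open scoped InnerProductSpace BigOperators

/-- Near `x₀` the maximum equals its strictly dominating member, so it has the same derivative. -/
theorem hasFDerivAt_sup'_of_strict {E ι : Type*} [NormedAddCommGroup E] [NormedSpace ℝ E]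
    [Fintype ι] (hne : (Finset.univ : Finset ι).Nonempty) (f : ι → E → ℝ) (x₀ : E) (t₀ : ι)
    (hf : ∀ t, ContinuousAt (f t) x₀) (hlt : ∀ t, t ≠ t₀ → f t x₀ < f t₀ x₀)
    {f' : E →L[ℝ] ℝ} (hd : HasFDerivAt (f t₀) f' x₀) :
    HasFDerivAt (fun x => Finset.univ.sup' hne (fun t => f t x)) f' x₀ := by
  refine hd.congr_of_eventuallyEq ?_
  have hev : ∀ᶠ x in nhds x₀, ∀ t, f t x ≤ f t₀ x := by
    rw [Filter.eventually_all]
    intro t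
    by_cases h : t = t₀
    · subst h
      exact Filter.Eventually.of_forall fun _ => le_rfl
    · exact ((hf t).eventually_lt (hf t₀) (hlt t h)).mono fun _ hx => hx.le
  filter_upwards [hev] with x hx
  exact le_antisymm (Finset.sup'_le _ _ fun t _ => hx t)
    (Finset.le_sup' (fun t => f t x) (Finset.mem_univ t₀))

/-- **Closed-form document gradient (Eq. 3).** For the contracted all-pairs MaxSim
objective `G(D) = ∑_{i,j} g i j * ∑_s max_t ⟪Q i s, D j t⟫`, if every `(i,j,s)` has a
strict forward argmax `t*(i,j,s)` at `D⁰`, then `G` is Fréchet differentiable at `D⁰`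
with derivative `ΔD ↦ ∑_{j,t} ⟪ΔD j t, ∑_{(i,s) : t*(i,j,s) = t} g i j • Q i s⟫`;
i.e. the gradient with respect to the document token `D j t` is the sum, over exactly
those pairs `(i,s)` whose forward argmax selected `t`, of `g i j • Q i s`. -/
theorem maxsim_document_gradient
    (Nq B Lq Ld d : ℕ) (hLd : 0 < Ld)
    (g : Fin Nq → Fin B → ℝ)
    (Q : Fin Nq → Fin Lq → EuclideanSpace ℝ (Fin d))
    (G : (Fin B → Fin Ld → EuclideanSpace ℝ (Fin d)) → ℝ)
    (hG : G = fun D => ∑ i : Fin Nq, ∑ j : Fin B, g i j *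
        ∑ s : Fin Lq,
          Finset.univ.sup'
            (Finset.univ_nonempty_iff.mpr (Fin.pos_iff_nonempty.mp hLd))
            (fun t => ⟪Q i s, D j t⟫_ℝ))
    (D0 : Fin B → Fin Ld → EuclideanSpace ℝ (Fin d))
    (tstar : Fin Nq → Fin B → Fin Lq → Fin Ld)
    (hstrict : ∀ (i : Fin Nq) (j : Fin B) (s : Fin Lq) (t : Fin Ld),
      t ≠ tstar i j s → ⟪Q i s, D0 j t⟫_ℝ < ⟪Q i s, D0 j (tstar i j s)⟫_ℝ) :
    ∃ L : (Fin B → Fin Ld → EuclideanSpace ℝ (Fin d)) →L[ℝ] ℝ,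
      (∀ ΔD : Fin B → Fin Ld → EuclideanSpace ℝ (Fin d),
        L ΔD = ∑ j : Fin B, ∑ t : Fin Ld,
          ⟪ΔD j t,
            ∑ p ∈ Finset.univ.filter
                (fun p : Fin Nq × Fin Lq => tstar p.1 j p.2 = t),
              g p.1 j • Q p.1 p.2⟫_ℝ) ∧
      HasFDerivAt G L D0 := by
  let ev (j : Fin B) (t : Fin Ld) :
      (Fin B → Fin Ld → EuclideanSpace ℝ (Fin d)) →L[ℝ] EuclideanSpace ℝ (Fin d) :=
    (ContinuousLinearMap.proj (R := ℝ) (φ := fun _ : Fin Ld => EuclideanSpace ℝ (Fin d)) t).comp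
      (ContinuousLinearMap.proj (R := ℝ) (φ := fun _ : Fin B => Fin Ld → EuclideanSpace ℝ (Fin d)) j)
  let ℓ (i : Fin Nq) (j : Fin B) (s : Fin Lq) (t : Fin Ld) :
      (Fin B → Fin Ld → EuclideanSpace ℝ (Fin d)) →L[ℝ] ℝ :=
    (innerSL ℝ (Q i s)).comp (ev j t)
  refine ⟨∑ i, ∑ j, g i j • ∑ s, ℓ i j s (tstar i j s), ?_, ?_⟩
  · intro ΔD
    have hℓ : ∀ i j s t, ℓ i j s t ΔD = ⟪ΔD j t, Q i s⟫_ℝ := fun i j s t =>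
      real_inner_comm (ΔD j t) (Q i s)
    simp only [sum_apply, smul_apply, hℓ, smul_eq_mul]
    rw [Finset.sum_comm]
    refine Finset.sum_congr rfl fun j _ => ?_
    simp only [inner_sum, inner_smul_right, Finset.mul_sum]
    simp only [Finset.sum_filter]
    -- Summing over `t` first leaves, for each pair `(i, s)`, only the term `t = t* i j s`.
    symm
    rw [Finset.sum_comm, Fintype.sum_prod_type]
    simp
  · rw [hG]
    refine HasFDerivAt.fun_sum fun i _ => HasFDerivAt.fun_sum fun j _ =>
      HasFDerivAt.const_mul (HasFDerivAt.fun_sum fun s _ => ?_) (g i j)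
    exact hasFDerivAt_sup'_of_strict _ (fun t D => ℓ i j s t D) D0 (tstar i j s)
      (fun t => (ℓ i j s t).continuous.continuousAt) (hstrict i j s)
      (ℓ i j s (tstar i j s)).hasFDerivAt
end

section
/- Let N, M > 0, let Q : Fin M → EuclideanSpace ℝ (Fin 3), fix P⁰ : Fin N → EuclideanSpace ℝ (Fin 3), and define CD on point clouds P : Fin N → EuclideanSpace ℝ (Fin 3) by CD(P) = (1/N) ∑_{n} min_{m} ‖P n − Q m‖² + (1/M) ∑_{m} min_{n} ‖Q m − P n‖². Suppose every forward nearest neighbour is strict: for each n there is q*(n) with ‖P⁰ n − Q (q*(n))‖ < ‖P⁰ n − Q m‖ for all m ≠ q*(n), and for each m there is p*(m) with ‖Q m − P⁰ (p*(m))‖ < ‖Q m − P⁰ n‖ for all n ≠ p*(m). Then CD is Fréchet differentiable at P⁰ (on the product space Fin N → EuclideanSpace ℝ (Fin 3)) with derivative ΔP ↦ ∑_{n} ⟪ΔP n, (2/N) • (P⁰ n − Q (q*(n))) + (2/M) • ∑_{m : p*(m) = n} (P⁰ n − Q m)⟫; equivalently, the gradient of CD with respect to the point P_n is (2/N)(P⁰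 n − Q_{q*(n)}) + (2/M) ∑_{m with nearest neighbour n} (P⁰ n − Q m). -/
/-!
Near `P0` the strict nearest neighbours persist: each of the finitely many strict inequalities
between continuous functions holds on a neighbourhood, so every minimum coincides locally with the
single smooth function selected by `qstar` or `pstar` (`inf'_eventuallyEq_of_strict`). The Chamfer
distance thus has the derivative of a finite sum of squared distances, and grouping the second sum
by the fibers of `pstar` gives the stated gradient.
-/

open scoped InnerProductSpace BigOperators

/-- A finite minimum of continuous functions with a strict minimiser `i₀` at `x₀` coincides with
its `i₀`-th member on a neighbourhood of `x₀`. -/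
lemma inf'_eventuallyEq_of_strict {ι X : Type*} [Fintype ι] [TopologicalSpace X]
    (h : (Finset.univ : Finset ι).Nonempty) (f : ι → X → ℝ) (x₀ : X) (i₀ : ι)
    (hc : ∀ i, ContinuousAt (f i) x₀) (hlt : ∀ i, i ≠ i₀ → f i₀ x₀ < f i x₀) :
    (fun x => Finset.univ.inf' h (fun i => f i x)) =ᶠ[nhds x₀] f i₀ := by
  have hev : ∀ᶠ x in nhds x₀, ∀ i, f i₀ x ≤ f i x := by
    rw [Filter.eventually_all]
    intro i
    by_cases hi : i = i₀
    · subst hi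
      exact Filter.Eventually.of_forall fun _ => le_rfl
    · exact ((hc i₀).eventually_lt (hc i) (hlt i hi)).mono fun _ hx => hx.le
  filter_upwards [hev] with x hx
  exact le_antisymm (Finset.inf'_le _ (Finset.mem_univ i₀))
    (Finset.le_inf' h _ fun i _ => hx i)

/-- The differential of `P ↦ ‖P n - q‖ ^ 2` at `P0`. -/
noncomputable def sqDistDeriv {N : ℕ} {V : Type*} [NormedAddCommGroup V]
    [InnerProductSpace ℝ V] (P0 : Fin N → V) (n : Fin N)
    (q : V) : (Fin N → V) →L[ℝ] ℝ :=
  2 • (innerSL ℝ (P0 n - q)).comp (ContinuousLinearMap.proj n)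

lemma sqDistDeriv_apply {N : ℕ} {V : Type*} [NormedAddCommGroup V]
    [InnerProductSpace ℝ V] (P0 D : Fin N → V) (n : Fin N)
    (q : V) :
    sqDistDeriv P0 n q D = 2 * ⟪D n, P0 n - q⟫_ℝ := by
  rw [real_inner_comm]
  simp [sqDistDeriv, inner_sub_left]

lemma hasFDerivAt_sqDist {N : ℕ} {V : Type*} [NormedAddCommGroup V]
    [InnerProductSpace ℝ V] (P0 : Fin N → V) (n : Fin N)
    (q : V) :
    HasFDerivAt (fun P : Fin N → V => ‖P n - q‖ ^ 2)
      (sqDistDeriv P0 n q) P0 :=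
  ((hasFDerivAt_apply (𝕜 := ℝ) n P0).sub_const q).norm_sq

/-- With a strict nearest neighbour `Q m₀` of `P0 n`, the squared distance from `P n` to the cloud
`Q` is differentiable at `P0`; the derivative depends only on the `n`-th point. -/
lemma hasFDerivAt_gather {N M : ℕ} {V : Type*} [NormedAddCommGroup V] [InnerProductSpace ℝ V]
    (h : (Finset.univ : Finset (Fin M)).Nonempty) (Q : Fin M → V) (P0 : Fin N → V)
    (n : Fin N) (m₀ : Fin M) (hq : ∀ m, m ≠ m₀ → ‖P0 n - Q m₀‖ < ‖P0 n - Q m‖) :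
    HasFDerivAt (fun P : Fin N → V => Finset.univ.inf' h (fun m => ‖P n - Q m‖ ^ 2))
      (sqDistDeriv P0 n (Q m₀)) P0 :=
  (hasFDerivAt_sqDist P0 n _).congr_of_eventuallyEq <| inf'_eventuallyEq_of_strict h
    (fun m (P : Fin N → V) => ‖P n - Q m‖ ^ 2) P0 m₀
    (fun m => (hasFDerivAt_sqDist P0 n (Q m)).continuousAt)
    (fun m hm => by have := hq m hm; gcongr)

/-- With a strict nearest neighbour `P0 n₀` of `q`, the squared distance from `q` to the cloud `P` is
differentiable at `P0`; the derivative acts only on the `n₀`-th point. -/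
lemma hasFDerivAt_scatter {N : ℕ} {V : Type*} [NormedAddCommGroup V] [InnerProductSpace ℝ V]
    (h : (Finset.univ : Finset (Fin N)).Nonempty) (q : V) (P0 : Fin N → V)
    (n₀ : Fin N) (hp : ∀ n, n ≠ n₀ → ‖q - P0 n₀‖ < ‖q - P0 n‖) :
    HasFDerivAt (fun P : Fin N → V => Finset.univ.inf' h (fun n => ‖q - P n‖ ^ 2))
      (sqDistDeriv P0 n₀ q) P0 := by
  simp only [norm_sub_rev q] at hp ⊢
  exact (hasFDerivAt_sqDist P0 n₀ q).congr_of_eventuallyEq <| inf'_eventuallyEq_of_strict h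
    (fun n (P : Fin N → V) => ‖P n - q‖ ^ 2) P0 n₀
    (fun n => (hasFDerivAt_sqDist P0 n q).continuousAt)
    (fun n hn => by have := hp n hn; gcongr)

/-- The Chamfer gradient in an arbitrary real inner product space. -/
lemma exists_hasFDerivAt_chamfer {N M : ℕ} {V : Type*} [NormedAddCommGroup V]
    [InnerProductSpace ℝ V]
    (hN : (Finset.univ : Finset (Fin N)).Nonempty) (hM : (Finset.univ : Finset (Fin M)).Nonempty)
    (Q : Fin M → V) (P0 : Fin N → V) (qstar : Fin N → Fin M) (pstar : Fin M → Fin N)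
    (hq : ∀ n m, m ≠ qstar n → ‖P0 n - Q (qstar n)‖ < ‖P0 n - Q m‖)
    (hp : ∀ m n, n ≠ pstar m → ‖Q m - P0 (pstar m)‖ < ‖Q m - P0 n‖) :
    ∃ L : (Fin N → V) →L[ℝ] ℝ,
      (∀ D : Fin N → V, L D = ∑ n : Fin N, ⟪D n, (2 / (N : ℝ)) • (P0 n - Q (qstar n)) +
        (2 / (M : ℝ)) • ∑ m ∈ Finset.univ.filter (fun m : Fin M => pstar m = n),
          (P0 n - Q m)⟫_ℝ) ∧
      HasFDerivAt (fun P : Fin N → V =>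
        (1 / (N : ℝ)) * ∑ n : Fin N, Finset.univ.inf' hM (fun m => ‖P n - Q m‖ ^ 2) +
        (1 / (M : ℝ)) * ∑ m : Fin M, Finset.univ.inf' hN (fun n => ‖Q m - P n‖ ^ 2)) L P0 := by
  refine ⟨(1 / (N : ℝ)) • ∑ n, sqDistDeriv P0 n (Q (qstar n)) +
    (1 / (M : ℝ)) • ∑ m, sqDistDeriv P0 (pstar m) (Q m), fun D => ?_, ?_⟩
  · -- The second sum is regrouped by the value of `pstar`.
    have hfib : ∑ m, ⟪D (pstar m), P0 (pstar m) - Q m⟫_ℝ =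
        ∑ n, ∑ m ∈ Finset.univ.filter (fun m : Fin M => pstar m = n),
          ⟪D n, P0 n - Q m⟫_ℝ := by
      rw [← Finset.sum_fiberwise Finset.univ pstar]
      refine Finset.sum_congr rfl fun n _ => Finset.sum_congr rfl fun m hm => ?_
      rw [(Finset.mem_filter.mp hm).2]
    simp only [add_apply, smul_apply, sum_apply, sqDistDeriv_apply,
      smul_eq_mul, inner_add_right, inner_smul_right, inner_sum, Finset.sum_add_distrib,
      ← Finset.mul_sum, hfib]
    ring
  · exact ((HasFDerivAt.fun_sum fun n _ => hasFDerivAt_gather hM Q P0 n _ (hq n)).const_mul _).add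
      ((HasFDerivAt.fun_sum fun m _ => hasFDerivAt_scatter hN (Q m) P0 _ (hp m)).const_mul _)

/-- **Closed-form Chamfer gradient.** With all forward nearest neighbours strict, the
Chamfer distance `CD(P) = (1/N) ∑_n min_m ‖P n − Q m‖² + (1/M) ∑_m min_n ‖Q m − P n‖²`
is Fréchet differentiable at `P⁰` on the product space `Fin N → EuclideanSpace ℝ (Fin 3)`,
with derivative
`ΔP ↦ ∑_n ⟪ΔP n, (2/N) • (P⁰ n − Q (q*(n))) + (2/M) • ∑_{m : p*(m) = n} (P⁰ n − Q m)⟫`;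
i.e. the gradient with respect to `P n` is
`(2/N)(P⁰ n − Q (q*(n))) + (2/M) ∑_{m with nearest neighbour n} (P⁰ n − Q m)`. -/
theorem chamfer_gradient
    (N M : ℕ) (hN : 0 < N) (hM : 0 < M)
    (Q : Fin M → EuclideanSpace ℝ (Fin 3))
    (CD : (Fin N → EuclideanSpace ℝ (Fin 3)) → ℝ)
    (hCD : CD = fun P =>
      (1 / (N : ℝ)) * ∑ n : Fin N,
          Finset.univ.inf'
            (Finset.univ_nonempty_iff.mpr (Fin.pos_iff_nonempty.mp hM))
            (fun m => ‖P n - Q m‖ ^ 2) +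
        (1 / (M : ℝ)) * ∑ m : Fin M,
          Finset.univ.inf'
            (Finset.univ_nonempty_iff.mpr (Fin.pos_iff_nonempty.mp hN))
            (fun n => ‖Q m - P n‖ ^ 2))
    (P0 : Fin N → EuclideanSpace ℝ (Fin 3))
    (qstar : Fin N → Fin M) (pstar : Fin M → Fin N)
    (hq : ∀ (n : Fin N) (m : Fin M), m ≠ qstar n →
      ‖P0 n - Q (qstar n)‖ < ‖P0 n - Q m‖)
    (hp : ∀ (m : Fin M) (n : Fin N), n ≠ pstar m →
      ‖Q m - P0 (pstar m)‖ < ‖Q m - P0 n‖) :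
    ∃ L : (Fin N → EuclideanSpace ℝ (Fin 3)) →L[ℝ] ℝ,
      (∀ ΔP : Fin N → EuclideanSpace ℝ (Fin 3),
        L ΔP = ∑ n : Fin N,
          ⟪ΔP n,
            (2 / (N : ℝ)) • (P0 n - Q (qstar n)) +
              (2 / (M : ℝ)) •
                ∑ m ∈ Finset.univ.filter (fun m : Fin M => pstar m = n),
                  (P0 n - Q m)⟫_ℝ) ∧
      HasFDerivAt CD L P0 := by
  subst hCD
  exact exists_hasFDerivAt_chamfer _ _ Q P0 qstar pstar hq hp
end

section
/- Let d, L_q > 0, L_max > 0, let Q : Fin L_q → EuclideanSpace ℝ (Fin d), let L ≤ L_max with L > 0 be the true (unpadded) document length, and let D, D' : Fin L_max → EuclideanSpace ℝ (Fin d) be two padded document embeddings that agree on all positions j with (j : ℕ) < L (the real tokens) and are arbitrary on positions j with (j : ℕ) ≥ L (the padding). Then the variable-length score computed over only the real tokens, ∑_{i : Fin L_q} sup_{j : Fin L_max, (j:ℕ) < L} ⟪Q i, D j⟫, is well defined (the index set is nonempty), equals the same expression with D replaced by D', and equals the padded score in which padding positions are masked to ⊥ in WithBot ℝ before the row reduction: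 ∑_{i} ((sup_{j : Fin L_max} (if (j:ℕ) < L then (⟪Q i, D j⟫ : WithBot ℝ) else ⊥)).unbot). -/
/-!
Since `⊥` is neutral for `⊔` and the coercion `ℝ → WithBot ℝ` preserves finite nonempty suprema,
each masked row supremum is the coercion of the real supremum over the positions `< L`
(`sup_masked_eq_coe_sup'`); in particular it is not `⊥`. That real supremum only sees positions
where `D` and `D'` agree, and position `0` shows that it is taken over a nonempty set.
-/

open scoped InnerProductSpace BigOperators

/-- Masking the entries outside `p` to `⊥` in `WithBot ℝ` leaves the real supremum over `p`,
because `⊥` is neutral for `⊔`. -/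
theorem sup_masked_eq_coe_sup' {ι : Type*} [Fintype ι] (p : ι → Prop) [DecidablePred p]
    (hne : (Finset.univ.filter p).Nonempty) (f : ι → ℝ) :
    (Finset.univ.sup fun j => if p j then (f j : WithBot ℝ) else ⊥) =
      (((Finset.univ.filter p).sup' hne f : ℝ) : WithBot ℝ) := by
  rw [Finset.coe_sup', Finset.sup_ite, Finset.sup_bot, sup_bot_eq]
  rfl

/-- **Exactness of padding-free variable-length scoring.** For a true document length
`0 < L ≤ L_max` and two padded embeddings `D, D'` agreeing on the real tokens
(positions `< L`) and arbitrary on the padding, the variable-length score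
`∑_i sup_{j < L} ⟪Q i, D j⟫` is well defined (the index set is nonempty), is
independent of the padding contents (equals the same score with `D'`), and equals the
padded score in which padding positions are masked to `⊥` in `WithBot ℝ` before the
row reduction. -/
theorem varlen_scoring_exact
    (d Lq Lmax L : ℕ) (hd : 0 < d) (hLq : 0 < Lq) (hLmax : 0 < Lmax)
    (hL : 0 < L) (hLle : L ≤ Lmax)
    (Q : Fin Lq → EuclideanSpace ℝ (Fin d))
    (D D' : Fin Lmax → EuclideanSpace ℝ (Fin d))
    (hagree : ∀ j : Fin Lmax, (j : ℕ) < L → D j = D' j) :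
    ∃ hne : (Finset.univ.filter fun j : Fin Lmax => (j : ℕ) < L).Nonempty,
      (∑ i : Fin Lq,
          (Finset.univ.filter fun j : Fin Lmax => (j : ℕ) < L).sup' hne
            (fun j => ⟪Q i, D j⟫_ℝ) =
        ∑ i : Fin Lq,
          (Finset.univ.filter fun j : Fin Lmax => (j : ℕ) < L).sup' hne
            (fun j => ⟪Q i, D' j⟫_ℝ)) ∧
      (∀ i : Fin Lq,
        (Finset.univ.sup fun j : Fin Lmax =>
          if (j : ℕ) < L then (⟪Q i, D j⟫_ℝ : WithBot ℝ) else ⊥) ≠ ⊥) ∧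
      ∀ h : ∀ i : Fin Lq,
          (Finset.univ.sup fun j : Fin Lmax =>
            if (j : ℕ) < L then (⟪Q i, D j⟫_ℝ : WithBot ℝ) else ⊥) ≠ ⊥,
        ∑ i : Fin Lq,
            (Finset.univ.filter fun j : Fin Lmax => (j : ℕ) < L).sup' hne
              (fun j => ⟪Q i, D j⟫_ℝ) =
          ∑ i : Fin Lq,
            (Finset.univ.sup fun j : Fin Lmax =>
              if (j : ℕ) < L then (⟪Q i, D j⟫_ℝ : WithBot ℝ) else ⊥).unbot (h i) := by
  have hne : (Finset.univ.filter fun j : Fin Lmax => (j : ℕ) < L).Nonempty :=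
    ⟨⟨0, hLmax⟩, by simpa using hL⟩
  have key := fun i : Fin Lq =>
    sup_masked_eq_coe_sup' (fun j : Fin Lmax => (j : ℕ) < L) hne (fun j => ⟪Q i, D j⟫_ℝ)
  refine ⟨hne, ?_, fun i => ?_, fun h => ?_⟩
  · refine Finset.sum_congr rfl fun i _ => Finset.sup'_congr hne rfl fun j hj => ?_
    rw [hagree j (Finset.mem_filter.mp hj).2]
  · rw [key i]
    exact WithBot.coe_ne_bot
  · refine Finset.sum_congr rfl fun i _ => ?_
    rw [← WithBot.coe_inj, WithBot.coe_unbot]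
    exact (key i).symm
end
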